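/- Let h : [0,∞) → [0,∞) be an operator monotone function with h(1) = 1, and for positive definite n×n complex matrices A, B define A σ B := A^{1/2} h(A^{-1/2} B A^{-1/2}) A^{1/2}. If h is geometrically convex (h(√(xy)) ≤ √(h(x)h(y)) for all x,y ≥ 0), then det^{1/n}(A σ B) ≥ (det^{1/n} A)·h(det^{1/n} B / det^{1/n} A); if h is geometrically concave (h(√(xy)) ≥ √(h(x)h(y))) and h(x) > 0 for x > 0, then the reverse inequality det^{1/n}(A σ B) ≤ (det^{1/n} A)·h(det^{1/n} B / det^{1/n} A) holds. -/

import Mathlib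

open scoped ComplexOrder

section Defs

variable {n : ℕ}

/-- eigenvalues of a Hermitian matrix listed in increasing order -/
noncomputable def eigUp {A : Matrix (Fin n) (Fin n) ℂ} (hA : A.IsHermitian) : Fin n → ℝ :=
  fun i => hA.eigenvalues (Tuple.sort hA.eigenvalues i)

/-- eigenvalues of a Hermitian matrix listed in decreasing order: `eigDown hA i = μ_{i+1}(A)` -/
noncomputable def eigDown {A : Matrix (Fin n) (Fin n) ℂ} (hA : A.IsHermitian) : Fin n → ℝ :=
  fun i => eigUp hA i.rev

/-- the product of the `k` smallest eigenvalues, `∏_{j=1}^k μ_{n+1-j}(A)` -/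
noncomputable def prodSmall (A : Matrix (Fin n) (Fin n) ℂ) (k : ℕ) : ℝ :=
  if hA : A.IsHermitian then
    ∏ i ∈ Finset.univ.filter (fun i : Fin n => (i : ℕ) < k), eigUp hA i
  else 0

/-- the product of the `k` largest eigenvalues, `∏_{j=1}^k μ_j(A)` -/
noncomputable def prodLarge (A : Matrix (Fin n) (Fin n) ℂ) (k : ℕ) : ℝ :=
  if hA : A.IsHermitian then
    ∏ i ∈ Finset.univ.filter (fun i : Fin n => (i : ℕ) < k), eigDown hA i
  else 0

/-- the sum of the `k` smallest eigenvalues, `∑_{j=1}^k μ_{n+1-j}(A)` -/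
noncomputable def sumSmall (A : Matrix (Fin n) (Fin n) ℂ) (k : ℕ) : ℝ :=
  if hA : A.IsHermitian then
    ∑ i ∈ Finset.univ.filter (fun i : Fin n => (i : ℕ) < k), eigUp hA i
  else 0

/-- A doubly concave function on an interval `Ω ⊆ [0,∞)`. -/
structure DoublyConcaveOn (f : ℝ → ℝ) (Ω : Set ℝ) : Prop where
  subset_Ici : Ω ⊆ Set.Ici (0 : ℝ)
  nonneg : ∀ x ∈ Ω, 0 ≤ f x
  continuousOn : ContinuousOn f Ω
  concaveOn : ConcaveOn ℝ Ω f
  geomConcave : ∀ x ∈ Ω, ∀ y ∈ Ω, Real.sqrt (f x * f y) ≤ f (Real.sqrt (x * y))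

/-- `𝔼_p(Z) := (𝔼(Z^p))^{1/p}` -/
noncomputable def Ep {n m : ℕ} (E : Matrix (Fin n) (Fin n) ℂ →ₗ[ℂ] Matrix (Fin m) (Fin m) ℂ)
    (p : ℝ) (Z : Matrix (Fin n) (Fin n) ℂ) : Matrix (Fin m) (Fin m) ℂ :=
  cfc (fun x : ℝ => x ^ (1 / p)) (E (cfc (fun x : ℝ => x ^ p) Z))

/-- the power `p`-mean `A β_p B := ((A^p + B^p)/2)^{1/p}` -/
noncomputable def betaP (p : ℝ) (A B : Matrix (Fin n) (Fin n) ℂ) : Matrix (Fin n) (Fin n) ℂ :=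
  cfc (fun x : ℝ => x ^ (1 / p))
    ((2 : ℂ)⁻¹ • (cfc (fun x : ℝ => x ^ p) A + cfc (fun x : ℝ => x ^ p) B))

noncomputable def sqrtM (A : Matrix (Fin n) (Fin n) ℂ) : Matrix (Fin n) (Fin n) ℂ :=
  cfc Real.sqrt A

noncomputable def invSqrtM (A : Matrix (Fin n) (Fin n) ℂ) : Matrix (Fin n) (Fin n) ℂ :=
  cfc (fun x : ℝ => (Real.sqrt x)⁻¹) A

/-- operator mean with representing function `h`: `A σ B = A^{1/2} h(A^{-1/2} B A^{-1/2}) A^{1/2}` -/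
noncomputable def opMean (h : ℝ → ℝ) (A B : Matrix (Fin n) (Fin n) ℂ) :
    Matrix (Fin n) (Fin n) ℂ :=
  sqrtM A * cfc h (invSqrtM A * B * invSqrtM A) * sqrtM A

/-- the weighted geometric mean `A #_α B` -/
noncomputable def sharp (α : ℝ) (A B : Matrix (Fin n) (Fin n) ℂ) : Matrix (Fin n) (Fin n) ℂ :=
  sqrtM A * cfc (fun x : ℝ => x ^ α) (invSqrtM A * B * invSqrtM A) * sqrtM A

/-- the (real) determinant of a Hermitian matrix -/
noncomputable def rdet (A : Matrix (Fin n) (Fin n) ℂ) : ℝ := (A.det).re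

open Classical in
/-- the derived anti-norm `‖A‖_! = ‖A^{-p}‖^{-1/p}` for invertible positive `A`, `0` otherwise. -/
noncomputable def derivedAntiNorm (N : Matrix (Fin n) (Fin n) ℂ → ℝ) (p : ℝ)
    (A : Matrix (Fin n) (Fin n) ℂ) : ℝ :=
  if IsUnit A.det then (N (cfc (fun x : ℝ => x ^ (-p)) A)) ^ (-(1 / p)) else 0

end Defs

/-!
With `C = A^{-1/2} B A^{-1/2}` and `l i` its eigenvalues, `det (A σ B) = det A * ∏ i, h (l i)` and
`∏ i, l i = det B / det A`. The two inequalities are therefore Jensen's inequality with equal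
weights for `log ∘ h ∘ exp`, in the multiplicative form `h g ^ n ≤ ∏ i, h (l i)` (or `≥`) where
`g ^ n = ∏ i, l i`. As all weights are equal, Cauchy's forward-backward induction derives it from
the case of two numbers; the concave case is the convex case for `1 / h`.
-/

/-- Geometric convexity of `f` on `s`, that is, midpoint convexity of `log ∘ f ∘ exp` when `s`
and `f` are positive. It is meant for `s ⊆ [0, ∞)` and `f ≥ 0`, as `√` vanishes on negative
numbers. -/
def GeomConvexOn (s : Set ℝ) (f : ℝ → ℝ) : Prop :=
  ∀ x ∈ s, ∀ y ∈ s, f √(x * y) ≤ √(f x * f y)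

/-- Geometric concavity of `f` on `s`: the counterpart of `GeomConvexOn` with the inequality
reversed. -/
def GeomConcaveOn (s : Set ℝ) (f : ℝ → ℝ) : Prop :=
  ∀ x ∈ s, ∀ y ∈ s, √(f x * f y) ≤ f √(x * y)

section Jensen

open Set

theorem GeomConcaveOn.inv {s : Set ℝ} {f : ℝ → ℝ} (hf : GeomConcaveOn s f)
    (hpos : ∀ x ∈ s, 0 < f x) : GeomConvexOn s fun x ↦ (f x)⁻¹ := by
  intro x hx y hy
  rw [← mul_inv, Real.sqrt_inv]
  exact inv_anti₀ (Real.sqrt_pos.2 (mul_pos (hpos x hx) (hpos y hy))) (hf x hx y hy)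

theorem GeomConvexOn.sq_le_mul {s : Set ℝ} {f : ℝ → ℝ} (hf : GeomConvexOn s f)
    (hnonneg : ∀ x ∈ s, 0 ≤ f x) {x y g : ℝ} (hx : x ∈ s) (hy : y ∈ s) (hg : g ∈ s)
    (hg_nonneg : 0 ≤ g) (hgxy : g ^ 2 = x * y) : f g ^ 2 ≤ f x * f y := by
  have hmid := hf x hx y hy
  rw [← hgxy, Real.sqrt_sq hg_nonneg] at hmid
  exact (Real.le_sqrt (hnonneg g hg) (mul_nonneg (hnonneg x hx) (hnonneg y hy))).1 hmid

/-- The equal-weight Jensen inequality for `f` on `n` positive numbers `l i`; the variable `g` is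
their geometric mean, pinned down by `g ^ n = ∏ i, l i` to keep real powers out of the induction. -/
def GeomJensen (f : ℝ → ℝ) (n : ℕ) : Prop :=
  ∀ (l : Fin n → ℝ) (g : ℝ), (∀ i, 0 < l i) → 0 < g → g ^ n = ∏ i, l i →
    f g ^ n ≤ ∏ i, f (l i)

theorem GeomJensen.one (f : ℝ → ℝ) : GeomJensen f 1 := by
  intro l g _ _ hgl
  rw [Fin.prod_univ_one, pow_one] at hgl ⊢
  rw [hgl]

theorem GeomJensen.of_succ {f : ℝ → ℝ} (hnonneg : ∀ x ∈ Ioi 0, 0 ≤ f x) {n : ℕ}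
    (h : GeomJensen f (n + 1)) : GeomJensen f n := by
  intro l g hl hg hgl
  rcases eq_or_ne n 0 with rfl | hn
  · simp
  rcases (hnonneg g hg).eq_or_lt with hfg | hfg
  · rw [← hfg, zero_pow hn]
    exact Finset.prod_nonneg fun i _ ↦ hnonneg _ (hl i)
  · -- Adjoining the geometric mean to the list does not change the geometric mean.
    have hcons := h (Fin.cons g l) g (Fin.cases hg hl) hg
      (by simp [Fin.prod_univ_succ, pow_succ', hgl])
    simp only [Fin.prod_univ_succ, Fin.cons_zero, Fin.cons_succ, pow_succ'] at hcons
    exact le_of_mul_le_mul_left hcons hfg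

theorem GeomJensen.double {f : ℝ → ℝ} (hf : GeomConvexOn (Ioi 0) f)
    (hnonneg : ∀ x ∈ Ioi 0, 0 ≤ f x) {n : ℕ} (hn : n ≠ 0) (h : GeomJensen f n) :
    GeomJensen f (2 * n) := by
  rw [two_mul]
  intro l g hl hg hgl
  have exists_root (p : ℝ) (hp : 0 < p) : ∃ x : ℝ, 0 < x ∧ x ^ n = p :=
    ⟨p ^ (n⁻¹ : ℝ), Real.rpow_pos_of_pos hp _, Real.rpow_inv_natCast_pow hp.le hn⟩
  obtain ⟨g₁, hg₁, hgl₁⟩ := exists_root (∏ i, l (Fin.castAdd n i))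
    (Finset.prod_pos fun i _ ↦ hl _)
  obtain ⟨g₂, hg₂, hgl₂⟩ := exists_root (∏ i, l (Fin.natAdd n i))
    (Finset.prod_pos fun i _ ↦ hl _)
  have hg_sq : g ^ 2 = g₁ * g₂ := by
    refine (pow_left_inj₀ (sq_nonneg g) (mul_pos hg₁ hg₂).le hn).1 ?_
    rw [← pow_mul, two_mul, hgl, Fin.prod_univ_add, mul_pow, hgl₁, hgl₂]
  calc f g ^ (n + n) = (f g ^ 2) ^ n := by rw [← pow_mul, two_mul]
    _ ≤ (f g₁ * f g₂) ^ n := by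
      gcongr
      exact hf.sq_le_mul hnonneg hg₁ hg₂ hg hg.le hg_sq
    _ = f g₁ ^ n * f g₂ ^ n := mul_pow ..
    _ ≤ (∏ i, f (l (Fin.castAdd n i))) * ∏ i, f (l (Fin.natAdd n i)) :=
      mul_le_mul (h _ g₁ (fun i ↦ hl _) hg₁ hgl₁) (h _ g₂ (fun i ↦ hl _) hg₂ hgl₂)
        (pow_nonneg (hnonneg g₂ hg₂) n) (Finset.prod_nonneg fun i _ ↦ hnonneg _ (hl _))
    _ = ∏ i, f (l i) := (Fin.prod_univ_add fun i ↦ f (l i)).symm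

theorem GeomConvexOn.geomJensen {f : ℝ → ℝ} (hf : GeomConvexOn (Ioi 0) f)
    (hnonneg : ∀ x ∈ Ioi 0, 0 ≤ f x) (n : ℕ) : GeomJensen f n :=
  Nat.cauchy_induction_two_mul (fun _ ↦ GeomJensen.of_succ hnonneg) 0 (GeomJensen.one f)
    (fun _ hm ↦ GeomJensen.double hf hnonneg hm.ne') n

theorem GeomConvexOn.pow_card_le_prod {ι : Type*} [Fintype ι] {f : ℝ → ℝ}
    (hf : GeomConvexOn (Ioi 0) f) (hnonneg : ∀ x ∈ Ioi 0, 0 ≤ f x) {l : ι → ℝ}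
    (hl : ∀ i, 0 < l i) {g : ℝ} (hg : 0 < g) (hgl : g ^ Fintype.card ι = ∏ i, l i) :
    f g ^ Fintype.card ι ≤ ∏ i, f (l i) := by
  let e := (Fintype.equivFin ι).symm
  rw [← e.prod_comp] at hgl ⊢
  exact hf.geomJensen hnonneg _ _ _ (fun i ↦ hl (e i)) hg hgl

theorem GeomConcaveOn.prod_le_pow_card {ι : Type*} [Fintype ι] {f : ℝ → ℝ}
    (hf : GeomConcaveOn (Ioi 0) f) (hpos : ∀ x ∈ Ioi 0, 0 < f x) {l : ι → ℝ}
    (hl : ∀ i, 0 < l i) {g : ℝ} (hg : 0 < g) (hgl : g ^ Fintype.card ι = ∏ i, l i) :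
    ∏ i, f (l i) ≤ f g ^ Fintype.card ι := by
  have hinv := (hf.inv hpos).pow_card_le_prod (fun x hx ↦ (inv_pos.2 (hpos x hx)).le) hl hg hgl
  rw [inv_pow, Finset.prod_inv_distrib] at hinv
  exact (inv_le_inv₀ (pow_pos (hpos g hg) _) (Finset.prod_pos fun i _ ↦ hpos _ (hl i))).1 hinv

end Jensen

section Determinants

theorem det_cfc_eq_prod_eigenvalues {ι 𝕜 : Type*} [Fintype ι] [DecidableEq ι] [RCLike 𝕜]
    {A : Matrix ι ι 𝕜} (hA : A.IsHermitian) (f : ℝ → ℝ) :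
    (cfc f A).det = ((∏ i, f (hA.eigenvalues i) : ℝ) : 𝕜) := by
  simp [hA.cfc_eq, Matrix.IsHermitian.cfc, -Unitary.conjStarAlgAut_apply]

variable {n : ℕ} {A B : Matrix (Fin n) (Fin n) ℂ}

theorem sqrtM_mul_self (hA : A.PosSemidef) : sqrtM A * sqrtM A = A := by
  have hsq : Set.EqOn (fun x ↦ √x * √x) id (spectrum ℝ A) := by
    rw [hA.1.spectrum_real_eq_range_eigenvalues, Set.eqOn_range]
    exact funext fun i ↦ Real.mul_self_sqrt (hA.eigenvalues_nonneg i)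
  rw [sqrtM, ← cfc_mul Real.sqrt Real.sqrt A, cfc_congr hsq, cfc_id ℝ A hA.1.isSelfAdjoint]

theorem invSqrtM_mul_sqrtM (hA : A.PosDef) : invSqrtM A * sqrtM A = 1 := by
  have hone : Set.EqOn (fun x ↦ (√x)⁻¹ * √x) (fun _ ↦ 1) (spectrum ℝ A) := by
    rw [hA.1.spectrum_real_eq_range_eigenvalues, Set.eqOn_range]
    exact funext fun i ↦ inv_mul_cancel₀ (Real.sqrt_pos.2 (hA.eigenvalues_pos i)).ne'
  have hcont : ContinuousOn (fun x ↦ (√x)⁻¹) (spectrum ℝ A) :=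
    (Matrix.finite_real_spectrum (A := A)).continuousOn _
  rw [invSqrtM, sqrtM, ← cfc_mul (fun x ↦ (√x)⁻¹) Real.sqrt A hcont, cfc_congr hone,
    cfc_const_one ℝ A hA.1.isSelfAdjoint]

theorem ofReal_rdet (hA : A.IsHermitian) : (rdet A : ℂ) = A.det :=
  Complex.conj_eq_iff_re.1 (by rw [starRingEnd_apply, ← Matrix.det_conjTranspose, hA.eq])

theorem rdet_pos (hA : A.PosDef) : 0 < rdet A := (Complex.pos_iff.1 hA.det_pos).1

theorem rdet_eq_prod_eigenvalues (hA : A.IsHermitian) : rdet A = ∏ i, hA.eigenvalues i := by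
  simp [rdet, hA.det_eq_prod_eigenvalues, ← Complex.ofReal_prod]

theorem posDef_invSqrtM_mul_mul_invSqrtM (hA : A.PosDef) (hB : B.PosDef) :
    (invSqrtM A * B * invSqrtM A).PosDef := by
  have hherm : star (invSqrtM A) = invSqrtM A := cfc_predicate (R := ℝ) (p := IsSelfAdjoint) _ A
  have hunit : IsUnit (invSqrtM A) := .of_mul_eq_one _ (invSqrtM_mul_sqrtM hA)
  simpa only [hherm] using (Matrix.IsUnit.posDef_star_left_conjugate_iff hunit).2 hB

theorem det_invSqrtM_mul_mul_invSqrtM (hA : A.PosDef) :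
    (invSqrtM A * B * invSqrtM A).det * A.det = B.det := by
  have hinv := congrArg Matrix.det (invSqrtM_mul_sqrtM hA)
  have hsq := congrArg Matrix.det (sqrtM_mul_self hA.posSemidef)
  simp only [Matrix.det_mul, Matrix.det_one] at hinv hsq ⊢
  linear_combination B.det * ((invSqrtM A).det * (sqrtM A).det + 1) * hinv
    - (invSqrtM A).det ^ 2 * B.det * hsq

theorem det_opMean (hA : A.PosSemidef) (h : ℝ → ℝ) :
    (opMean h A B).det = A.det * (cfc h (invSqrtM A * B * invSqrtM A)).det := by
  rw [opMean, Matrix.det_mul_right_comm, sqrtM_mul_self hA, Matrix.det_mul]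

theorem prod_eigenvalues_invSqrtM_mul_mul_invSqrtM (hA : A.PosDef) (hB : B.IsHermitian)
    (hC : (invSqrtM A * B * invSqrtM A).IsHermitian) :
    ∏ i, hC.eigenvalues i = rdet B / rdet A := by
  rw [← rdet_eq_prod_eigenvalues hC, eq_div_iff (rdet_pos hA).ne']
  have hdet := det_invSqrtM_mul_mul_invSqrtM (B := B) hA
  rw [← ofReal_rdet hA.1, ← ofReal_rdet hB, ← ofReal_rdet hC] at hdet
  exact_mod_cast hdet

theorem rdet_opMean (hA : A.PosSemidef)
    (hC : (invSqrtM A * B * invSqrtM A).IsHermitian) (h : ℝ → ℝ) :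
    rdet (opMean h A B) = rdet A * ∏ i, h (hC.eigenvalues i) := by
  rw [rdet, det_opMean hA, det_cfc_eq_prod_eigenvalues hC h, ← ofReal_rdet hA.1]
  exact Complex.re_ofReal_mul ..

end Determinants

section OperatorMean

open Set

variable {n : ℕ} {A B : Matrix (Fin n) (Fin n) ℂ} {h : ℝ → ℝ}

theorem rdet_opMean_nonneg (hnonneg : ∀ x ∈ Ioi 0, 0 ≤ h x) (hA : A.PosDef) (hB : B.PosDef) :
    0 ≤ rdet (opMean h A B) := by
  have hC := posDef_invSqrtM_mul_mul_invSqrtM hA hB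
  rw [rdet_opMean hA.posSemidef hC.1]
  exact mul_nonneg (rdet_pos hA).le (Finset.prod_nonneg fun i _ ↦ hnonneg _ (hC.eigenvalues_pos i))

theorem GeomConvexOn.le_rdet_opMean (hh : GeomConvexOn (Ioi 0) h)
    (hnonneg : ∀ x ∈ Ioi 0, 0 ≤ h x) (hA : A.PosDef) (hB : B.PosDef) {g : ℝ} (hg : 0 < g)
    (hgAB : g ^ n = rdet B / rdet A) : rdet A * h g ^ n ≤ rdet (opMean h A B) := by
  have hC := posDef_invSqrtM_mul_mul_invSqrtM hA hB
  rw [← prod_eigenvalues_invSqrtM_mul_mul_invSqrtM hA hB.1 hC.1] at hgAB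
  rw [rdet_opMean hA.posSemidef hC.1]
  refine mul_le_mul_of_nonneg_left ?_ (rdet_pos hA).le
  simpa using hh.pow_card_le_prod hnonneg hC.eigenvalues_pos hg (by simpa using hgAB)

theorem GeomConcaveOn.rdet_opMean_le (hh : GeomConcaveOn (Ioi 0) h)
    (hpos : ∀ x ∈ Ioi 0, 0 < h x) (hA : A.PosDef) (hB : B.PosDef) {g : ℝ} (hg : 0 < g)
    (hgAB : g ^ n = rdet B / rdet A) : rdet (opMean h A B) ≤ rdet A * h g ^ n := by
  have hC := posDef_invSqrtM_mul_mul_invSqrtM hA hB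
  rw [← prod_eigenvalues_invSqrtM_mul_mul_invSqrtM hA hB.1 hC.1] at hgAB
  rw [rdet_opMean hA.posSemidef hC.1]
  refine mul_le_mul_of_nonneg_left ?_ (rdet_pos hA).le
  simpa using hh.prod_le_pow_card hpos hC.eigenvalues_pos hg (by simpa using hgAB)

theorem stmt_8_general {n : ℕ} (hn : 0 < n) (h : ℝ → ℝ) (A B : Matrix (Fin n) (Fin n) ℂ)
    (hA : A.PosDef) (hB : B.PosDef) :
    (GeomConvexOn (Ioi 0) h → (∀ x ∈ Ioi 0, 0 ≤ h x) →
      rdet A ^ (n : ℝ)⁻¹ * h (rdet B ^ (n : ℝ)⁻¹ / rdet A ^ (n : ℝ)⁻¹)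
        ≤ rdet (opMean h A B) ^ (n : ℝ)⁻¹) ∧
    (GeomConcaveOn (Ioi 0) h → (∀ x ∈ Ioi 0, 0 < h x) →
      rdet (opMean h A B) ^ (n : ℝ)⁻¹
        ≤ rdet A ^ (n : ℝ)⁻¹ * h (rdet B ^ (n : ℝ)⁻¹ / rdet A ^ (n : ℝ)⁻¹)) := by
  set a := rdet A ^ (n : ℝ)⁻¹
  set b := rdet B ^ (n : ℝ)⁻¹
  have ha : 0 < a := Real.rpow_pos_of_pos (rdet_pos hA) _
  have hg : 0 < b / a := div_pos (Real.rpow_pos_of_pos (rdet_pos hB) _) ha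
  have ha_pow : a ^ n = rdet A := Real.rpow_inv_natCast_pow (rdet_pos hA).le hn.ne'
  have hb_pow : b ^ n = rdet B := Real.rpow_inv_natCast_pow (rdet_pos hB).le hn.ne'
  have hg_pow : (b / a) ^ n = rdet B / rdet A := by rw [div_pow, ha_pow, hb_pow]
  constructor
  · intro hconv hnonneg
    rw [Real.le_rpow_inv_iff_of_pos (mul_nonneg ha.le (hnonneg _ hg))
      (rdet_opMean_nonneg hnonneg hA hB) (Nat.cast_pos.2 hn), Real.rpow_natCast, mul_pow, ha_pow]
    exact hconv.le_rdet_opMean hnonneg hA hB hg hg_pow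
  · intro hconc hpos
    rw [Real.rpow_inv_le_iff_of_pos (rdet_opMean_nonneg (fun x hx ↦ (hpos x hx).le) hA hB)
      (mul_pos ha (hpos _ hg)).le (Nat.cast_pos.2 hn), Real.rpow_natCast, mul_pow, ha_pow]
    exact hconc.rdet_opMean_le hpos hA hB hg hg_pow

end OperatorMean

theorem stmt_8 {n : ℕ} (hn : 0 < n) (h : ℝ → ℝ) (hnn : ∀ x : ℝ, 0 ≤ x → 0 ≤ h x)
    (hcont : ContinuousOn h (Set.Ici 0)) (h1 : h 1 = 1)
    (hopmono : ∀ (m : ℕ) (X Y : Matrix (Fin m) (Fin m) ℂ), X.PosSemidef →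
      (Y - X).PosSemidef → (cfc h Y - cfc h X).PosSemidef)
    (A B : Matrix (Fin n) (Fin n) ℂ) (hA : A.PosDef) (hB : B.PosDef) :
    ((∀ x y : ℝ, 0 ≤ x → 0 ≤ y → h (Real.sqrt (x * y)) ≤ Real.sqrt (h x * h y)) →
      (rdet A ^ ((n : ℝ)⁻¹)) * h ((rdet B ^ ((n : ℝ)⁻¹)) / (rdet A ^ ((n : ℝ)⁻¹)))
        ≤ rdet (opMean h A B) ^ ((n : ℝ)⁻¹)) ∧
    ((∀ x y : ℝ, 0 ≤ x → 0 ≤ y → Real.sqrt (h x * h y) ≤ h (Real.sqrt (x * y))) →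
      (∀ x : ℝ, 0 < x → 0 < h x) →
      rdet (opMean h A B) ^ ((n : ℝ)⁻¹)
        ≤ (rdet A ^ ((n : ℝ)⁻¹)) * h ((rdet B ^ ((n : ℝ)⁻¹)) / (rdet A ^ ((n : ℝ)⁻¹)))) := by
  exact (stmt_8_general hn h A B hA hB).imp
    (fun hgen hconv ↦ hgen (fun x hx y hy ↦ hconv x y hx.le hy.le) fun x hx ↦ hnn x hx.le)
    (fun hgen hconc ↦ hgen fun x hx y hy ↦ hconc x y hx.le hy.le)
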